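/- For every integer t ≥ 4, the monomial w_3^{2^{t-2}-1}·w_4^{2^{t-2}-2} belongs to the ideal I_{2^t-2,4} of F_2[w_2,w_3,w_4]. -/

import Mathlib

open MvPolynomial

/-- The polynomials `g_r = g_r^{(4)}` in `F_2[w_2,w_3,w_4]` (variables `X 0 = w_2`,
`X 1 = w_3`, `X 2 = w_4`): `g_0 = 1`, `g_r = 0` for `r < 0`, and
`g_r = w_2·g_{r-2} + w_3·g_{r-3} + w_4·g_{r-4}` for `r ≥ 1`. -/
noncomputable def g4 : ℤ → MvPolynomial (Fin 3) (ZMod 2)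
  | r =>
    if r ≤ 0 then (if r = 0 then 1 else 0)
    else X 0 * g4 (r - 2) + X 1 * g4 (r - 3) + X 2 * g4 (r - 4)
  termination_by r => r.toNat
  decreasing_by all_goals omega

/-- The ideal `I_{n,4} = (g_{n-3}, g_{n-2}, g_{n-1}, g_n)` of `F_2[w_2,w_3,w_4]`. -/
noncomputable def I4 (n : ℤ) : Ideal (MvPolynomial (Fin 3) (ZMod 2)) :=
  Ideal.span {g4 (n - 3), g4 (n - 2), g4 (n - 1), g4 n}

theorem g4_neg (r : ℤ) (h : r < 0) : g4 r = 0 := by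
  rw [g4, if_pos h.le, if_neg h.ne]

theorem g4_zero : g4 0 = 1 := by
  rw [g4]; simp

theorem g4_rec (r : ℤ) (h : r ≠ 0) :
    g4 r = X 0 * g4 (r - 2) + X 1 * g4 (r - 3) + X 2 * g4 (r - 4) := by
  by_cases h' : r < 0
  · rw [g4_neg r h', g4_neg _ (by omega : r - 2 < 0), g4_neg _ (by omega : r - 3 < 0),
      g4_neg _ (by omega : r - 4 < 0)]
    ring
  · rw [g4, if_neg (by omega)]

theorem two0 : (2 : MvPolynomial (Fin 3) (ZMod 2)) = 0 := by
  have := CharP.cast_eq_zero (MvPolynomial (Fin 3) (ZMod 2)) 2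
  exact_mod_cast this

theorem sq3 (a b c : MvPolynomial (Fin 3) (ZMod 2)) :
    (a + b + c) ^ 2 = a ^ 2 + b ^ 2 + c ^ 2 := by
  linear_combination (a * b + a * c + b * c) * two0

theorem g4_double (n : ℕ) : ∀ m : ℤ, m < n →
    g4 (2 * m) = g4 m ^ 2 + X 0 * g4 (m - 1) ^ 2 + X 2 * g4 (m - 2) ^ 2 ∧
    g4 (2 * m + 1) = X 1 * g4 (m - 1) ^ 2 := by
  induction n with
  | zero =>
    intro m hm
    have hm : m < 0 := by simpa using hm
    rw [g4_neg _ (by omega : 2 * m < 0), g4_neg _ (by omega : 2 * m + 1 < 0),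
      g4_neg _ (by omega : m < 0), g4_neg _ (by omega : m - 1 < 0),
      g4_neg _ (by omega : m - 2 < 0)]
    constructor <;> ring
  | succ n ih =>
    intro m hm
    push_cast at hm
    obtain ⟨a1, b1⟩ := ih (m - 1) (by omega)
    obtain ⟨a2, b2⟩ := ih (m - 2) (by omega)
    rw [show 2 * (m - 1) = 2 * m - 2 by ring, show m - 1 - 1 = m - 2 by ring,
      show m - 1 - 2 = m - 3 by ring] at a1
    rw [show 2 * (m - 1) + 1 = 2 * m - 1 by ring, show m - 1 - 1 = m - 2 by ring] at b1
    rw [show 2 * (m - 2) = 2 * m - 4 by ring, show m - 2 - 1 = m - 3 by ring,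
      show m - 2 - 2 = m - 4 by ring] at a2
    rw [show 2 * (m - 2) + 1 = 2 * m - 3 by ring, show m - 2 - 1 = m - 3 by ring] at b2
    constructor
    · by_cases h0 : m = 0
      · subst h0
        simp [g4_zero, g4_neg]
      · have hs := congrArg (· ^ 2) (g4_rec m h0)
        simp only [sq3] at hs
        rw [g4_rec (2 * m) (by omega), a1, b2, a2, hs]
        linear_combination (X 0 * X 2 * g4 (m - 3) ^ 2 - X 0 * g4 (m - 1) ^ 2 * 0) * two0
    · rw [g4_rec (2 * m + 1) (by omega), show 2 * m + 1 - 2 = 2 * m - 1 by ring,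
        show 2 * m + 1 - 3 = 2 * m - 2 by ring, show 2 * m + 1 - 4 = 2 * m - 3 by ring, a1, b1, b2]
      linear_combination (X 0 * X 1 * g4 (m - 2) ^ 2 + X 1 * X 2 * g4 (m - 3) ^ 2) * two0

theorem g4_even (m : ℤ) :
    g4 (2 * m) = g4 m ^ 2 + X 0 * g4 (m - 1) ^ 2 + X 2 * g4 (m - 2) ^ 2 :=
  (g4_double (m.toNat + 1) m (by push_cast; omega)).1

theorem g4_odd (m : ℤ) : g4 (2 * m + 1) = X 1 * g4 (m - 1) ^ 2 :=
  (g4_double (m.toNat + 1) m (by push_cast; omega)).2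

theorem g4_three (k : ℕ) : g4 (3 * 2 ^ k - 3) = X 1 ^ (2 ^ k - 1) := by
  induction k with
  | zero => simp [g4_zero]
  | succ k ih =>
    rw [show (3 * 2 ^ (k + 1) - 3 : ℤ) = 2 * (3 * 2 ^ k - 2) + 1 by ring, g4_odd,
      show (3 * 2 ^ k - 2 - 1 : ℤ) = 3 * 2 ^ k - 3 by ring, ih, ← pow_mul, ← pow_succ']
    congr 1
    have := Nat.one_le_two_pow (n := k)
    rw [pow_succ]; omega

theorem g4_five (k : ℕ) : g4 (5 * 2 ^ k - 3) = X 0 ^ (2 ^ k) * X 1 ^ (2 ^ k - 1) := by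
  induction k with
  | zero =>
    norm_num
    rw [g4_rec 2 (by norm_num)]
    norm_num [g4_zero, g4_neg]
  | succ k ih =>
    rw [show (5 * 2 ^ (k + 1) - 3 : ℤ) = 2 * (5 * 2 ^ k - 2) + 1 by ring, g4_odd,
      show (5 * 2 ^ k - 2 - 1 : ℤ) = 5 * 2 ^ k - 3 by ring, ih]
    obtain ⟨e, he⟩ : ∃ e, 2 ^ k = e + 1 := ⟨2 ^ k - 1, by have := Nat.one_le_two_pow (n := k); omega⟩
    rw [pow_succ 2 k, he, show (e + 1) * 2 - 1 = 2 * e + 1 by omega, Nat.add_sub_cancel]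
    ring

theorem g4_frob (k : ℕ) :
    (∀ r : ℤ, 4 * 2 ^ k - 4 < r → g4 r = X 0 ^ (2 ^ k) * g4 (r - 2 * 2 ^ k)
      + X 1 ^ (2 ^ k) * g4 (r - 3 * 2 ^ k) + X 2 ^ (2 ^ k) * g4 (r - 4 * 2 ^ k)) ∧
    X 2 ^ (2 ^ k - 1) = g4 (4 * 2 ^ k - 4) + X 0 ^ (2 ^ k) * g4 (2 * 2 ^ k - 4)
      + X 1 ^ (2 ^ k) * g4 (2 ^ k - 4) := by
  induction k with
  | zero =>
    constructor
    · intro r hr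
      have := g4_rec r (by norm_num at hr; omega)
      simpa using this
    · norm_num [g4_zero, g4_neg]
  | succ k ih =>
    obtain ⟨ih1, ih2⟩ := ih
    have hp (i : Fin 3) : (X i : MvPolynomial (Fin 3) (ZMod 2)) ^ (2 ^ (k + 1))
        = (X i ^ (2 ^ k)) ^ 2 := by rw [← pow_mul, ← pow_succ]
    have hz : (2 : ℤ) ^ (k + 1) = 2 * 2 ^ k := by ring
    have hsq (r : ℤ) (h : 4 * 2 ^ k - 4 < r) := (congrArg (· ^ 2) (ih1 r h))
    simp only [sq3] at hsq
    have hpos : (1 : ℤ) ≤ 2 ^ k := one_le_pow₀ (by norm_num)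
    rw [hz]
    simp only [hp]
    constructor
    · intro r hr
      obtain ⟨m, rfl | rfl⟩ := Int.even_or_odd' r
      · rw [show 2 * m - 2 * (2 * 2 ^ k) = 2 * (m - 2 * 2 ^ k) by ring,
          show 2 * m - 3 * (2 * 2 ^ k) = 2 * (m - 3 * 2 ^ k) by ring,
          show 2 * m - 4 * (2 * 2 ^ k) = 2 * (m - 4 * 2 ^ k) by ring]
        simp only [g4_even]
        rw [hsq m (by omega), hsq (m - 1) (by omega), hsq (m - 2) (by omega)]
        simp only [sub_right_comm m _ ((_ : ℤ) * 2 ^ k)]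
        ring
      · rw [show 2 * m + 1 - 2 * (2 * 2 ^ k) = 2 * (m - 2 * 2 ^ k) + 1 by ring,
          show 2 * m + 1 - 3 * (2 * 2 ^ k) = 2 * (m - 3 * 2 ^ k) + 1 by ring,
          show 2 * m + 1 - 4 * (2 * 2 ^ k) = 2 * (m - 4 * 2 ^ k) + 1 by ring]
        simp only [g4_odd]
        rw [hsq (m - 1) (by omega)]
        simp only [sub_right_comm m _ ((_ : ℤ) * 2 ^ k)]
        ring
    · have e : (X 2 : MvPolynomial (Fin 3) (ZMod 2)) ^ (2 ^ (k + 1) - 1)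
          = X 2 * (X 2 ^ (2 ^ k - 1)) ^ 2 := by
        rw [← pow_mul, ← pow_succ']
        congr 1
        have := Nat.one_le_two_pow (n := k)
        rw [pow_succ]; omega
      rw [e, ih2, sq3, show (4 * (2 * 2 ^ k) - 4 : ℤ) = 2 * (4 * 2 ^ k - 2) by ring,
        show (2 * (2 * 2 ^ k) - 4 : ℤ) = 2 * (2 * 2 ^ k - 2) by ring]
      have e3 := g4_even (2 ^ k - 2)
      rw [show (2 * (2 ^ k - 2) : ℤ) = 2 * 2 ^ k - 4 by ring,
        show (2 ^ k - 2 - 2 : ℤ) = 2 ^ k - 4 by ring] at e3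
      have h1 := hsq (4 * 2 ^ k - 2) (by omega)
      have h2 := hsq (4 * 2 ^ k - 2 - 1) (by omega)
      rw [g4_neg (4 * 2 ^ k - 2 - 4 * 2 ^ k) (by omega),
        show (4 * 2 ^ k - 2 - 2 * 2 ^ k : ℤ) = 2 * 2 ^ k - 2 by ring,
        show (4 * 2 ^ k - 2 - 3 * 2 ^ k : ℤ) = 2 ^ k - 2 by ring] at h1
      rw [g4_neg (4 * 2 ^ k - 2 - 1 - 4 * 2 ^ k) (by omega),
        show (4 * 2 ^ k - 2 - 1 - 2 * 2 ^ k : ℤ) = 2 * 2 ^ k - 2 - 1 by ring,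
        show (4 * 2 ^ k - 2 - 1 - 3 * 2 ^ k : ℤ) = 2 ^ k - 2 - 1 by ring] at h2
      rw [g4_even (4 * 2 ^ k - 2), g4_even (2 * 2 ^ k - 2), h1, h2,
        show (4 * 2 ^ k - 2 - 2 : ℤ) = 4 * 2 ^ k - 4 by ring,
        show (2 * 2 ^ k - 2 - 2 : ℤ) = 2 * 2 ^ k - 4 by ring]
      generalize g4 (2 * 2 ^ k - 2) = a at e3 ⊢
      generalize g4 (2 ^ k - 2) = b at e3 ⊢
      generalize g4 (2 * 2 ^ k - 2 - 1) = c at e3 ⊢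
      generalize g4 (2 ^ k - 2 - 1) = d at e3 ⊢
      generalize (X 0 : MvPolynomial (Fin 3) (ZMod 2)) ^ 2 ^ k = u at e3 ⊢
      generalize (X 1 : MvPolynomial (Fin 3) (ZMod 2)) ^ 2 ^ k = v at e3 ⊢
      linear_combination (-(u ^ 2 * a ^ 2 + v ^ 2 * b ^ 2
        + X 0 * (u ^ 2 * c ^ 2 + v ^ 2 * d ^ 2))) * two0 - v ^ 2 * e3

theorem g4_mem (n : ℤ) (hn : 8 ≤ n) (j : ℕ) : g4 (n - 3 + j) ∈ I4 n := by
  induction j using Nat.strong_induction_on with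
  | _ j ih =>
    by_cases hj : j < 4
    · apply Ideal.subset_span
      interval_cases j
      · simp
      · simp [show n - 3 + 1 = n - 2 by ring]
      · simp [show n - 3 + 2 = n - 1 by ring]
      · simp
    · obtain ⟨i, rfl⟩ : ∃ i, j = i + 4 := ⟨j - 4, by omega⟩
      have h2 := ih (i + 2) (by omega)
      have h3 := ih (i + 1) (by omega)
      have h4 := ih i (by omega)
      rw [g4_rec _ (by push_cast; omega)]
      push_cast at *
      rw [show n - 3 + ((i : ℤ) + 4) - 2 = n - 3 + (i + 2) by ring,
        show n - 3 + ((i : ℤ) + 4) - 3 = n - 3 + (i + 1) by ring,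
        show n - 3 + ((i : ℤ) + 4) - 4 = n - 3 + i by ring]
      exact add_mem (add_mem (Ideal.mul_mem_left _ _ h2) (Ideal.mul_mem_left _ _ h3))
        (Ideal.mul_mem_left _ _ h4)

/-- Lemma 5.3(b): for every `t ≥ 4`, `w_3^{2^{t-2}-1} w_4^{2^{t-2}-2} ∈ I_{2^t-2,4}`. -/
theorem stmt16 (t : ℕ) (ht : 4 ≤ t) :
    (X 1 : MvPolynomial (Fin 3) (ZMod 2)) ^ (2 ^ (t - 2) - 1) * X 2 ^ (2 ^ (t - 2) - 2)
      ∈ I4 (2 ^ t - 2) := by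
  obtain ⟨k, rfl⟩ : ∃ k, t = k + 3 := ⟨t - 3, by omega⟩
  have hk : (2 : ℤ) ≤ 2 ^ k := by
    calc (2 : ℤ) = 2 ^ 1 := by norm_num
      _ ≤ 2 ^ k := pow_le_pow_right₀ (by norm_num) (by omega)
  have hz : (2 : ℤ) ^ (k + 3) = 8 * 2 ^ k := by ring
  have hmem (r : ℤ) (hr : 8 * 2 ^ k - 5 ≤ r) : g4 r ∈ I4 (2 ^ (k + 3) - 2) := by
    have := g4_mem (2 ^ (k + 3) - 2) (by omega) (r - (8 * 2 ^ k - 5)).toNat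
    rwa [Int.toNat_of_nonneg (by omega), hz,
      show (8 * 2 ^ k - 2 - 3 + (r - (8 * 2 ^ k - 5)) : ℤ) = r by ring, ← hz] at this
  have h1 := hmem _ (by omega : (8 * 2 ^ k - 5 : ℤ) ≤ 2 * (4 * 2 ^ k - 3) + 1)
  have h2 := hmem (5 * 2 ^ (k + 1) - 3) (by rw [pow_succ]; omega)
  have h3 := hmem (3 * 2 ^ (k + 2) - 3) (by rw [pow_add]; omega)
  rw [g4_odd, show (4 * 2 ^ k - 3 - 1 : ℤ) = 4 * 2 ^ k - 4 by ring] at h1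
  rw [g4_five] at h2
  rw [g4_three] at h3
  have hf := congrArg (· ^ 2) (g4_frob k).2
  simp only [sq3] at hf
  rw [show k + 3 - 2 = k + 1 by omega]
  obtain ⟨e, he⟩ : ∃ e, 2 ^ k = e + 1 := ⟨2 ^ k - 1, by have := Nat.one_le_two_pow (n := k); omega⟩
  simp only [pow_succ 2 k, pow_succ 2 (k + 1), he] at hf h2 h3 ⊢
  rw [show (e + 1) * 2 * 2 - 1 = 4 * e + 3 by omega] at h3
  rw [show (e + 1) * 2 - 1 = 2 * e + 1 by omega] at h2 ⊢
  rw [show (e + 1) * 2 - 2 = e * 2 by omega, pow_mul (X 2)]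
  rw [Nat.add_sub_cancel] at hf
  rw [hf]
  have := add_mem (add_mem (Ideal.mul_mem_left _ (X 1 ^ (2 * e)) h1)
    (Ideal.mul_mem_left _ (g4 (2 * 2 ^ k - 4) ^ 2) h2))
    (Ideal.mul_mem_left _ (g4 (2 ^ k - 4) ^ 2) h3)
  convert this using 1
  ring
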